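/- Fix q ∈ (0,1). For all x, y ∈ I: dim_q(x)·dim_q(y) = Σ_{t∈I} mᵗ_{x,y}·dim_q(t), the sum having only finitely many nonzero terms (dim_q is multiplicative on the free fusion rules). Consequently, for every finitely supported probability measure μ on I and every s ∈ I, Σ_{t∈I} p_μ(s,t) = 1, i.e., p_μ is a stochastic kernel. -/

import Mathlib

open scoped ENNReal

namespace Paper

/-- Words in the two letters `α, β`: the free monoid on two generators, as `List Bool`.
The head of the list is the leftmost letter. -/
abbrev Word := List Bool

/-- Length of the longest common prefix of two lists. -/
def lcpLen : List Bool → List Bool → ℕ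
  | a :: s, b :: t => if a = b then lcpLen s t + 1 else 0
  | _, _ => 0

/-- Length of the longest common suffix of two words. -/
def lcsLen (s t : Word) : ℕ := lcpLen s.reverse t.reverse

/-- The tree metric on `Word`: `d(s,t) = (|s| - k) + (|t| - k)`, `k` the length of the
longest common suffix. -/
def treeDist (s t : Word) : ℕ := (s.length - lcsLen s t) + (t.length - lcsLen s t)

/-- The branch `Δ_x = {u x : u ∈ I}` of words having `x` as a suffix. -/
def Delta (x : Word) : Set Word := {s | x <:+ s}

/-- The geodesic segment `[s,t] = {v : d(s,v) + d(v,t) = d(s,t)}`. -/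
def geodesic (s t : Word) : Set Word := {v | treeDist s v + treeDist v t = treeDist s t}

/-- Paths of `n` steps from `s` to `t` staying in `Ω`. -/
def pathSet {X : Type*} (Ω : Set X) (n : ℕ) (s t : X) : Set (Fin (n + 1) → X) :=
  {σ | σ 0 = s ∧ σ (Fin.last n) = t ∧ ∀ i, σ i ∈ Ω}

/-- The weight `∏ a(s_i, s_{i+1})` of a path, as an extended nonnegative real. -/
noncomputable def weightE {X : Type*} (a : X → X → ℝ) (n : ℕ) (σ : Fin (n + 1) → X) : ℝ≥0∞ :=
  ∏ i : Fin n, ENNReal.ofReal (a (σ i.castSucc) (σ i.succ))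

/-- The `n`-step kernel `a⁽ⁿ⁾(s,t)` of the kernel `a` on `Ω`, with values in `[0,∞]`. -/
noncomputable def nStepE {X : Type*} (Ω : Set X) (a : X → X → ℝ) (n : ℕ) (s t : X) : ℝ≥0∞ :=
  ∑' σ : pathSet Ω n s t, weightE a n σ.1

/-- The Green kernel `G_a(s,t) = Σ_n a⁽ⁿ⁾(s,t)` of `a` on `Ω`, with values in `[0,∞]`. -/
noncomputable def greenE {X : Type*} (Ω : Set X) (a : X → X → ℝ) (s t : X) : ℝ≥0∞ :=
  ∑' n : ℕ, nStepE Ω a n s t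

/-- The weight of a path, real version (for signed kernels). -/
noncomputable def weightR {X : Type*} (a : X → X → ℝ) (n : ℕ) (σ : Fin (n + 1) → X) : ℝ :=
  ∏ i : Fin n, a (σ i.castSucc) (σ i.succ)

/-- The `n`-step kernel of a signed kernel `a` on `Ω`. -/
noncomputable def nStepR {X : Type*} (Ω : Set X) (a : X → X → ℝ) (n : ℕ) (s t : X) : ℝ :=
  ∑' σ : pathSet Ω n s t, weightR a n σ.1

/-- The Green kernel of a signed kernel `a` on `Ω`, as a real number. -/
noncomputable def greenR {X : Type*} (Ω : Set X) (a : X → X → ℝ) (s t : X) : ℝ :=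
  ∑' n : ℕ, nStepR Ω a n s t

/-- The Green kernel of `|a|`: finiteness of this expresses absolute convergence of the
series defining the Green kernel of `a`. -/
noncomputable def greenAbs {X : Type*} (Ω : Set X) (a : X → X → ℝ) (s t : X) : ℝ≥0∞ :=
  greenE Ω (fun u v => |a u v|) s t

/-- (H1): finite range `S`. -/
def H1 (p : Word → Word → ℝ) (S : ℕ) : Prop := ∀ s t, S < treeDist s t → p s t = 0

/-- (H2): nonzero transition probabilities are bounded below by `δ₀`. -/
def H2 (p : Word → Word → ℝ) (δ₀ : ℝ) : Prop := ∀ s t, 0 < p s t → δ₀ ≤ p s t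

/-- (H3): uniform irreducibility. -/
def H3 (p : Word → Word → ℝ) (δ₀ : ℝ) (K : ℕ) : Prop :=
  ∀ s t, treeDist s t = 1 → ∃ k ≤ K, ∃ u : ℕ → Word, u 0 = s ∧ u k = t ∧
    ∀ i < k, ∀ x : Word, δ₀ ≤ p (u i ++ x) (u (i + 1) ++ x)

/-- The operator `(Pf)(s) = Σ_t p(s,t) f(t)` extends to a bounded operator of norm at most
`lam` on `ℓ²(X, m)`, expressed via the associated bilinear form on finitely supported
functions. -/
def opNormBound {X : Type*} (m : X → ℝ) (p : X → X → ℝ) (lam : ℝ) : Prop :=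
  ∀ f g : X → ℝ, (Function.support f).Finite → (Function.support g).Finite →
    |∑' s, m s * g s * ∑' t, p s t * f t| ≤
      lam * Real.sqrt (∑' x, m x * f x ^ 2) * Real.sqrt (∑' x, m x * g x ^ 2)

/-- (H4): there is a weight `m` for which `P` is bounded of norm at most `lam` on `ℓ²(I,m)`. -/
def H4 (p : Word → Word → ℝ) (m : Word → ℝ) (lam : ℝ) : Prop :=
  (∀ x, 0 < m x) ∧ opNormBound m p lam

/-- Substochasticity: `Σ_t p(s,t) ≤ 1` for every `s`. -/
def Substochastic (p : Word → Word → ℝ) : Prop :=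
  ∀ s, (∑' t, ENNReal.ofReal (p s t)) ≤ 1

/-- `b` is a `q`-perturbation of `p` on `Δ_z` (with constant `C`). -/
def Perturb (p b : Word → Word → ℝ) (z : Word) (q C : ℝ) : Prop :=
  ∀ s t, s ∈ Delta z → t ∈ Delta z →
    |b s t| ≤ p s t ∧ |b s t - p s t| ≤ C * q ^ s.length

/-- The word `ω|k = ω(k-1) ω(k-2) ⋯ ω(0)` of length `k` determined by an end `ω`. -/
def endWord (ω : ℕ → Bool) (k : ℕ) : Word := (List.range k).reverse.map ω

/-- The last-entrance kernel `M_p(s,u)`: sum over paths from `s` to `u` of length at least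
one whose second-to-last point lies outside `Δ_x`. -/
noncomputable def lastEnter (p : Word → Word → ℝ) (x s u : Word) : ℝ≥0∞ :=
  ∑' m : ℕ, ∑' σ : {σ : Fin (m + 2) → Word //
      σ ∈ pathSet Set.univ (m + 1) s u ∧ σ ((Fin.last m).castSucc) ∉ Delta x},
    weightE p (m + 1) σ.1

/-- The quantum integer `[n]_q = (q⁻ⁿ - qⁿ)/(q⁻¹ - q)`. -/
noncomputable def qInt (q : ℝ) (n : ℕ) : ℝ := (q ^ (-(n : ℤ)) - q ^ (n : ℤ)) / (q⁻¹ - q)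

/-- The lengths of the blocks in the canonical factorization of a word into maximal
alternating subwords. -/
def blockLens : Word → List ℕ
  | [] => []
  | [_] => [1]
  | a :: b :: rest =>
    match blockLens (b :: rest) with
    | [] => [1]
    | k :: ks => if a = b then 1 :: (k :: ks) else (k + 1) :: ks

/-- The quantum dimension `dim_q(x) = Π_i [|x_i| + 1]_q` over the blocks of `x`. -/
noncomputable def dimq (q : ℝ) (x : Word) : ℝ := ((blockLens x).map fun L => qInt q (L + 1)).prod

/-- The classical dimension `dim(x) = Π_i (|x_i| + 1)` over the blocks of `x`. -/
noncomputable def dimn (x : Word) : ℝ := ((blockLens x).map fun L => (L + 1 : ℝ)).prod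

/-- The involution `x ↦ x̄`: reverse the word and exchange the two letters. -/
def bar (x : Word) : Word := (x.map fun a => !a).reverse

/-- The fusion multiplicity `mᵗ_{r,s}`: the number of words `z` such that `r = r₀ z`,
`s = z̄ s₀`, `t = r₀ s₀` for some `r₀, s₀`. -/
noncomputable def fuse (r s t : Word) : ℕ :=
  {z : Word | ∃ r₀ s₀ : Word, r = r₀ ++ z ∧ s = bar z ++ s₀ ∧ t = r₀ ++ s₀}.ncard

/-- A finitely supported probability measure on `Word`. -/
def IsProbMeasure (μ : Word → ℝ) : Prop :=
  (∀ x, 0 ≤ μ x) ∧ (Function.support μ).Finite ∧ ∑' x, μ x = 1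

/-- The transition kernel `p_μ(s,t) = Σ_r μ(r) mᵗ_{r,s} dim_q(t)/(dim_q(r) dim_q(s))`. -/
noncomputable def pMu (q : ℝ) (μ : Word → ℝ) (s t : Word) : ℝ :=
  ∑' r, μ r * (fuse r s t : ℝ) * dimq q t / (dimq q r * dimq q s)

/-- The `q`-binomial coefficient. -/
noncomputable def qbinom (q : ℝ) (n k : ℕ) : ℝ :=
  q ^ (-((k * (n - k) : ℕ) : ℤ)) *
    ∏ i ∈ Finset.range k, (1 - q ^ (2 * (n - i))) / (1 - q ^ (2 * (k - i)))

/-!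
The point is that dimensions and fusion multiplicities obey the same recursion at the junction of
two words: for letters `a`, `b`,
`dim(xa) dim(by) = dim(xaby) + [a ≠ b] dim(x) dim(y)` and `m(xa, by) = 1_{xaby} + [a ≠ b] m(x, y)`.
The first is the Chebyshev relation `[2][n+1] = [n+2] + [n]`, applied one letter at a time; for the
second, the cancelled word `z` is either empty or ends in `a`, and in the latter case `z̄` begins
with the letter other than `a`. Summing the kernel `p_μ` over `t` then leaves the total mass of `μ`.
-/

section QuantumInteger

variable {q : ℝ}

-- Since `0⁻¹ = 0`, the condition `q⁻¹ ≠ q` says exactly that `q ∉ {-1, 0, 1}`.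
theorem qInt_one (hq : q⁻¹ ≠ q) : qInt q 1 = 1 := by
  simp [qInt, sub_ne_zero.2 hq]

theorem qInt_ne_zero (hq : q⁻¹ ≠ q) {n : ℕ} (hn : n ≠ 0) : qInt q n ≠ 0 := by
  refine div_ne_zero (sub_ne_zero.2 fun h ↦ hq ?_) (sub_ne_zero.2 hq)
  rw [zpow_neg, zpow_natCast, inv_eq_self₀] at h
  rw [inv_eq_self₀]
  rcases h with h | h | h
  · exact .inl (pow_eq_neg_one_iff.1 h).1
  · exact .inr (.inl (eq_zero_of_pow_eq_zero h))
  · rcases (pow_eq_one_iff_of_ne_zero hn).1 h with h | h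
    · exact .inr (.inr h)
    · exact .inl h.1

theorem qInt_two_mul (hq : q⁻¹ ≠ q) (n : ℕ) :
    qInt q 2 * qInt q (n + 1) = qInt q (n + 2) + qInt q n := by
  have hq0 : q ≠ 0 := by rintro rfl; simp at hq
  have hq2 : 1 - q ^ 2 ≠ 0 := by
    contrapose! hq
    field_simp
    linear_combination hq
  simp only [qInt, zpow_neg, zpow_natCast]
  field_simp
  ring

end QuantumInteger

section QuantumDimension

variable {q : ℝ}

theorem dimq_nil (q : ℝ) : dimq q [] = 1 := rfl

theorem dimq_singleton (q : ℝ) (a : Bool) : dimq q [a] = qInt q 2 := by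
  simp [dimq, blockLens]

theorem dimq_ne_zero (hq : q⁻¹ ≠ q) (x : Word) : dimq q x ≠ 0 := by
  simp only [dimq, ne_eq, List.prod_eq_zero_iff, List.mem_map, not_exists, not_and]
  exact fun L _ ↦ qInt_ne_zero hq L.succ_ne_zero

theorem exists_blockLens_cons_eq (a : Bool) (x : Word) :
    ∃ k ks, blockLens (a :: x) = k :: ks := by
  cases x with
  | nil => exact ⟨1, [], rfl⟩
  | cons b x =>
    rw [blockLens]
    split
    · exact ⟨_, _, rfl⟩
    · split_ifs <;> exact ⟨_, _, rfl⟩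

theorem blockLens_cons_cons_self (a : Bool) (x : Word) :
    blockLens (a :: a :: x) = 1 :: blockLens (a :: x) := by
  obtain ⟨k, ks, h⟩ := exists_blockLens_cons_eq a x
  simp [blockLens, h]

theorem blockLens_cons_cons_of_ne {a b : Bool} (hab : a ≠ b) {x : Word} {k : ℕ} {ks : List ℕ}
    (h : blockLens (b :: x) = k :: ks) : blockLens (a :: b :: x) = (k + 1) :: ks := by
  simp [blockLens, h, hab]

-- If the first block of `b :: x` is the single letter `b`, then `k = 1` and the factor is
-- `[1]_q = 1`.
theorem dimq_eq_of_blockLens_cons_eq (hq : q⁻¹ ≠ q) {b : Bool} {x : Word} {k : ℕ} {ks : List ℕ}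
    (h : blockLens (b :: x) = k :: ks) :
    dimq q x = qInt q k * (ks.map fun L ↦ qInt q (L + 1)).prod := by
  cases x with
  | nil =>
    obtain ⟨rfl, rfl⟩ : 1 = k ∧ [] = ks := by simpa [blockLens] using h
    simp [dimq_nil, qInt_one hq]
  | cons c x =>
    obtain ⟨m, ms, hm⟩ := exists_blockLens_cons_eq c x
    obtain rfl | hbc := eq_or_ne b c
    · obtain ⟨rfl, rfl⟩ := List.cons.inj ((blockLens_cons_cons_self b x).symm.trans h)
      simp [dimq, qInt_one hq]
    · obtain ⟨rfl, rfl⟩ := List.cons.inj ((blockLens_cons_cons_of_ne hbc hm).symm.trans h)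
      simp [dimq, hm]

theorem dimq_cons_cons (hq : q⁻¹ ≠ q) (a b : Bool) (x : Word) :
    dimq q (a :: b :: x) = qInt q 2 * dimq q (b :: x) - if a = b then 0 else dimq q x := by
  obtain rfl | hab := eq_or_ne a b
  · simp [dimq, blockLens_cons_cons_self]
  · obtain ⟨k, ks, h⟩ := exists_blockLens_cons_eq b x
    rw [if_neg hab, dimq_eq_of_blockLens_cons_eq hq h]
    simp only [dimq, blockLens_cons_cons_of_ne hab h, h, List.map_cons, List.prod_cons]
    linear_combination -(ks.map fun L ↦ qInt q (L + 1)).prod * qInt_two_mul hq k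

theorem dimq_append_singleton_mul_dimq_cons (hq : q⁻¹ ≠ q) (a b : Bool) (x y : Word) :
    dimq q (x ++ [a]) * dimq q (b :: y) =
      dimq q (x ++ a :: b :: y) + if a = b then 0 else dimq q x * dimq q y := by
  induction x using List.twoStepInduction with
  | nil =>
    simp only [List.nil_append, dimq_singleton, dimq_cons_cons hq a b, dimq_nil]
    split_ifs <;> ring
  | singleton c =>
    simp only [List.cons_append, List.nil_append, dimq_cons_cons hq, dimq_singleton, dimq_nil]
    split_ifs <;> ring
  | cons_cons c d x ih ih' =>
    specialize ih' d
    simp only [List.cons_append, dimq_cons_cons hq c d] at ih' ⊢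
    obtain hcd | hcd := eq_or_ne c d
    · simp only [if_pos hcd]
      split_ifs at ih' ⊢ <;> linear_combination qInt q 2 * ih'
    · simp only [if_neg hcd]
      split_ifs at ih ih' ⊢ <;> linear_combination qInt q 2 * ih' - ih

end QuantumDimension

section Fusion

variable {x y t z : Word}

/-- The words `z` whose cancellation between `x = x₀ z` and `y = z̄ y₀` leaves `t = x₀ y₀`; their
number is the fusion multiplicity `fuse x y t`. -/
def fusionSet (x y t : Word) : Set Word :=
  {z | ∃ x₀ y₀ : Word, x = x₀ ++ z ∧ y = bar z ++ y₀ ∧ t = x₀ ++ y₀}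

theorem fuse_eq_ncard_fusionSet (x y t : Word) : fuse x y t = (fusionSet x y t).ncard := rfl

theorem finite_fusionSet (x y t : Word) : (fusionSet x y t).Finite := by
  refine (List.finite_toSet x.tails).subset ?_
  rintro z ⟨x₀, _, rfl, -, -⟩
  simp

theorem finite_support_fuse (x y : Word) : (Function.support (fuse x y)).Finite := by
  refine ((List.finite_toSet x.inits).image2 (· ++ ·) (List.finite_toSet y.tails)).subset ?_
  intro t ht
  obtain ⟨z, x₀, y₀, hx, hy, rfl⟩ := Set.nonempty_of_ncard_ne_zero ht
  exact Set.mem_image2_of_mem (by simp [hx]) (by simp [hy])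

theorem nil_mem_fusionSet : [] ∈ fusionSet x y t ↔ t = x ++ y := by
  simp [fusionSet, bar]

theorem append_singleton_mem_fusionSet {c : Bool} :
    z ++ [c] ∈ fusionSet x y t ↔
      ∃ x' y', x = x' ++ [c] ∧ y = (!c) :: y' ∧ z ∈ fusionSet x' y' t := by
  have bar_append_singleton : bar (z ++ [c]) = (!c) :: bar z := by simp [bar]
  simp only [fusionSet, Set.mem_ofPred_eq, bar_append_singleton]
  constructor
  · rintro ⟨x₀, y₀, rfl, rfl, rfl⟩
    exact ⟨x₀ ++ z, bar z ++ y₀, by simp, by simp, x₀, y₀, rfl, rfl, rfl⟩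
  · rintro ⟨_, _, rfl, rfl, x₀, y₀, rfl, rfl, rfl⟩
    exact ⟨x₀, y₀, by simp, by simp, rfl⟩

theorem fuse_eq_add_ncard_sdiff (x y t : Word) :
    fuse x y t = (if t = x ++ y then 1 else 0) + (fusionSet x y t \ {[]}).ncard := by
  rw [fuse_eq_ncard_fusionSet]
  split_ifs with h
  · rw [add_comm,
      Set.ncard_sdiff_singleton_add_one (nil_mem_fusionSet.2 h) (finite_fusionSet x y t)]
  · rw [Set.sdiff_singleton_eq_self (mt nil_mem_fusionSet.1 h), zero_add]

theorem fuse_nil_left (y t : Word) : fuse [] y t = if t = y then 1 else 0 := by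
  have : fusionSet [] y t \ {[]} = ∅ := by
    ext z
    cases z using List.reverseRecOn <;> simp [append_singleton_mem_fusionSet]
  simp [fuse_eq_add_ncard_sdiff, this]

theorem fuse_nil_right (x t : Word) : fuse x [] t = if t = x then 1 else 0 := by
  have : fusionSet x [] t \ {[]} = ∅ := by
    ext z
    cases z using List.reverseRecOn <;> simp [append_singleton_mem_fusionSet]
  simp [fuse_eq_add_ncard_sdiff, this]

theorem fusionSet_append_singleton_cons_sdiff (a b : Bool) (x y t : Word) :
    fusionSet (x ++ [a]) (b :: y) t \ {[]} =
      if a = b then ∅ else (· ++ [a]) '' fusionSet x y t := by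
  ext z
  cases z using List.reverseRecOn with
  | nil => split_ifs <;> simp
  | append_singleton z c =>
    cases a <;> cases b <;> cases c <;> simp [append_singleton_mem_fusionSet]

theorem fuse_append_singleton_cons (a b : Bool) (x y t : Word) :
    fuse (x ++ [a]) (b :: y) t =
      (if t = x ++ a :: b :: y then 1 else 0) + if a = b then 0 else fuse x y t := by
  rw [fuse_eq_add_ncard_sdiff, fusionSet_append_singleton_cons_sdiff, List.append_assoc,
    List.singleton_append]
  congr 1
  split_ifs
  · exact Set.ncard_empty _
  · exact Set.ncard_image_of_injective _ (List.append_left_injective [a])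

end Fusion

section Multiplicativity

variable {q : ℝ}

theorem hasSum_fuse_mul_dimq (hq : q⁻¹ ≠ q) (x y : Word) :
    HasSum (fun t ↦ (fuse x y t : ℝ) * dimq q t) (dimq q x * dimq q y) := by
  have hasSum_single_word (w : Word) :
      HasSum (fun t ↦ ((if t = w then 1 else 0 : ℕ) : ℝ) * dimq q t) (dimq q w) := by
    simpa using hasSum_single (f := fun t ↦ ((if t = w then 1 else 0 : ℕ) : ℝ) * dimq q t) w
      (by simp +contextual)
  induction x using List.reverseRecOn generalizing y with
  | nil => simpa only [fuse_nil_left, dimq_nil, one_mul] using hasSum_single_word y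
  | append_singleton x a ih =>
    cases y with
    | nil => simpa only [fuse_nil_right, dimq_nil, mul_one] using hasSum_single_word (x ++ [a])
    | cons b y =>
      simp only [fuse_append_singleton_cons, Nat.cast_add, add_mul,
        dimq_append_singleton_mul_dimq_cons hq]
      refine (hasSum_single_word _).add ?_
      split_ifs
      · simp [hasSum_zero]
      · exact ih y

theorem hasSum_pMu (hq : q⁻¹ ≠ q) {μ : Word → ℝ} (hμ : (Function.support μ).Finite) (s : Word) :
    HasSum (pMu q μ s) (∑' r, μ r) := by
  have hasSum_term (r : Word) :
      HasSum (fun t ↦ μ r * (fuse r s t : ℝ) * dimq q t / (dimq q r * dimq q s)) (μ r) := by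
    have hrs : dimq q r * dimq q s ≠ 0 := mul_ne_zero (dimq_ne_zero hq r) (dimq_ne_zero hq s)
    simpa only [mul_div_cancel_right₀ _ hrs, ← mul_assoc (μ r) (fuse r s _ : ℝ)] using
      ((hasSum_fuse_mul_dimq hq r s).mul_left (μ r)).div_const (dimq q r * dimq q s)
  have pMu_eq_sum : pMu q μ s = fun t ↦ ∑ r ∈ hμ.toFinset,
      μ r * (fuse r s t : ℝ) * dimq q t / (dimq q r * dimq q s) :=
    funext fun t ↦ tsum_eq_sum fun r hr ↦ by simp_all
  rw [pMu_eq_sum, tsum_eq_sum (s := hμ.toFinset) fun r hr ↦ by simp_all]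
  exact hasSum_sum fun r _ ↦ hasSum_term r

theorem dimq_fusion_multiplicative_general (hq : q⁻¹ ≠ q) :
    (∀ x y : Word,
      (Function.support fun t ↦ (fuse x y t : ℝ) * dimq q t).Finite ∧
      dimq q x * dimq q y = ∑' t, (fuse x y t : ℝ) * dimq q t) ∧
    ∀ μ : Word → ℝ, (Function.support μ).Finite →
      ∀ s : Word, ∑' t, pMu q μ s t = ∑' r, μ r := by
  refine ⟨fun x y ↦ ⟨(finite_support_fuse x y).subset fun t ht ↦ ?_,
    (hasSum_fuse_mul_dimq hq x y).tsum_eq.symm⟩, fun μ hμ s ↦ (hasSum_pMu hq hμ s).tsum_eq⟩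
  exact Nat.cast_ne_zero.1 (left_ne_zero_of_mul ht)

end Multiplicativity

/-- Multiplicativity of `dim_q` on the free fusion rules:
`dim_q(x) dim_q(y) = Σ_t mᵗ_{x,y} dim_q(t)` (a finite sum), and consequently `p_μ` is a
stochastic kernel for every finitely supported probability measure `μ`. -/
theorem dimq_fusion_multiplicative (q : ℝ) (hq : q ∈ Set.Ioo (0 : ℝ) 1) :
    (∀ x y : Word,
      (Function.support fun t => (fuse x y t : ℝ) * dimq q t).Finite ∧
      dimq q x * dimq q y = ∑' t, (fuse x y t : ℝ) * dimq q t) ∧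
    ∀ μ : Word → ℝ, IsProbMeasure μ → ∀ s : Word, (∑' t, pMu q μ s t) = 1 := by
  have h := dimq_fusion_multiplicative_general (hq.2.trans ((one_lt_inv₀ hq.1).2 hq.2)).ne'
  exact ⟨h.1, fun μ hμ s ↦ (h.2 μ hμ.2.1 s).trans hμ.2.2⟩

end Paper
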